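/- Let S ⊆ ℝⁿ be a nonempty closed set, let α ∈ (0,1] and n < p < ∞. Then there exists a constant C depending only on n, p and α such that for every continuously differentiable function F : ℝⁿ → ℝ with ∫_{ℝⁿ} ‖∇F(x)‖^p dx < ∞, the restriction f := F|_S satisfies ∫_0^∞ 𝔸_{p,α}(f; t : S)^p t^{−p−1} dt ≤ C ∫_{ℝⁿ} ‖∇F(x)‖^p dx. (The paper states this for continuous functions in the homogeneous Sobolev space L_p^1(ℝⁿ); here F is taken to be C¹ with p-integrable gradient.) -/

import Mathlib

/-!
Fix `q` with `n < q < p` and put `M = maxFun (|∇F|^q)`, the Hardy–Littlewood maximal function.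
Morrey's inequality (`morrey`) bounds the oscillation of `F` on a cube `Q` of radius `r` by
`r · M(x)^(1/q)` for every `x ∈ Q`, up to constants. Morrey's inequality alone would only give
`𝔸(t)^p ≤ C t^p ∫ |∇F|^p`, for which the integral over `t` diverges logarithmically; porosity
localizes each scale to its own region.

If `Q` is centered in `S` and porous, it contains a smaller cube of comparable volume on which
`d(x) = dist(x, S)` is comparable to `r` (`Porous.exists_hole`). Integrating the pointwise bound
over these disjoint cubes gives `𝔸(t)^p ≤ C ∫_{d ≤ t} d^p M^(p/q)` (`apPorous_rpow_le`), with a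
right-hand side independent of the packing. Integrating against `t^(-p-1) dt` and exchanging the
integrals, the factor `∫_d^∞ t^(-p-1) dt = d^(-p)/p` cancels `d^p` (`rpow_mul_lintegral_tail_le`),
leaving `C ∫ M^(p/q)`. The maximal theorem with exponent `p/q > 1` (`maxFun_strong`, proved from
the Vitali covering lemma) bounds this by `C ∫ |∇F|^p`.

The estimates are carried out in `ℝ≥0∞`, so that Tonelli's theorem applies without integrability
side conditions; integrability of `|∇F|^p` is used only to identify the final right-hand side.
-/

open MeasureTheory Metric Set
open scoped ENNReal

/-- A closed cube `Q(c, r)` in `ℝⁿ` (with the uniform norm): center `c`, radius `r`. -/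
structure PCube (n : ℕ) where
  c : Fin n → ℝ
  r : ℝ

namespace PCube

variable {n : ℕ}

/-- The underlying set of the cube. -/
def toSet (Q : PCube n) : Set (Fin n → ℝ) := Metric.closedBall Q.c Q.r

/-- The diameter `2r` of the cube (uniform norm). -/
def diam (Q : PCube n) : ℝ := 2 * Q.r

/-- Dilation `λQ` of the cube about its center. -/
def scale (Q : PCube n) (l : ℝ) : PCube n := ⟨Q.c, l * Q.r⟩

/-- The volume `|Q| = (2r)ⁿ` of the cube. -/
def vol (Q : PCube n) : ℝ := (2 * Q.r) ^ n

end PCube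

/-- Distance between two subsets of `ℝⁿ`. -/
noncomputable def setDist {n : ℕ} (A B : Set (Fin n → ℝ)) : ℝ :=
  sInf (Set.image2 dist A B)

/-- Oscillation `E(f; U)` of `f` on `U`. -/
noncomputable def osc {n : ℕ} (f : (Fin n → ℝ) → ℝ) (U : Set (Fin n → ℝ)) : ℝ :=
  sSup ((fun q : (Fin n → ℝ) × (Fin n → ℝ) => |f q.1 - f q.2|) '' (U ×ˢ U))

/-- `Q` is `α`-porous with respect to `S`. -/
def Porous {n : ℕ} (α : ℝ) (S : Set (Fin n → ℝ)) (Q : PCube n) : Prop :=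
  ∃ Q' : PCube n, 0 < Q'.r ∧ Q'.toSet ⊆ Q.toSet \ S ∧ α * Q.diam ≤ Q'.diam

/-- `‖∇F(x)‖ = max_i |∂F/∂x_i(x)|`. -/
noncomputable def gradNorm {n : ℕ} (F : (Fin n → ℝ) → ℝ) (x : Fin n → ℝ) : ℝ :=
  ‖fun i : Fin n => fderiv ℝ F x (Pi.single i 1)‖

/-- A packing: a finite family of nondegenerate, pairwise disjoint cubes. -/
def IsPacking {n : ℕ} (π : Finset (PCube n)) : Prop :=
  (∀ Q ∈ π, 0 < Q.r) ∧ ∀ Q ∈ π, ∀ Q' ∈ π, Q ≠ Q' → Disjoint Q.toSet Q'.toSet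

/-- All cubes in the family have equal diameter. -/
def EqualDiam {n : ℕ} (π : Finset (PCube n)) : Prop :=
  ∀ Q ∈ π, ∀ Q' ∈ π, Q.r = Q'.r

/-- The functional `A_p(f; t : S)` (via local oscillations). -/
noncomputable def Ap {n : ℕ} (p : ℝ) (f : (Fin n → ℝ) → ℝ) (t : ℝ)
    (S : Set (Fin n → ℝ)) : ℝ≥0∞ :=
  ⨆ π ∈ {π : Finset (PCube n) | IsPacking π ∧ EqualDiam π ∧ (∀ Q ∈ π, Q.c ∈ S) ∧
      ∀ Q ∈ π, Q.diam ≤ t},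
    ENNReal.ofReal ((∑ Q ∈ π, Q.vol * osc f (Q.toSet ∩ S) ^ p) ^ (1 / p))

/-- `𝔸_{p,α}(f; t : S)`: as `A_p` but over `α`-porous packings. -/
noncomputable def ApPorous {n : ℕ} (p α : ℝ) (f : (Fin n → ℝ) → ℝ) (t : ℝ)
    (S : Set (Fin n → ℝ)) : ℝ≥0∞ :=
  ⨆ π ∈ {π : Finset (PCube n) | IsPacking π ∧ EqualDiam π ∧ (∀ Q ∈ π, Q.c ∈ S) ∧
      (∀ Q ∈ π, Q.diam ≤ t) ∧ ∀ Q ∈ π, Porous α S Q},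
    ENNReal.ofReal ((∑ Q ∈ π, Q.vol * osc f (Q.toSet ∩ S) ^ p) ^ (1 / p))

/-- `E(f; Q)_{L_p(μ)}`. -/
noncomputable def oscLp {n : ℕ} (μ : Measure (Fin n → ℝ)) (p : ℝ) (f : (Fin n → ℝ) → ℝ)
    (Q : PCube n) : ℝ≥0∞ :=
  ((μ Q.toSet)⁻¹ ^ 2 *
    ∫⁻ x in Q.toSet, ∫⁻ y in Q.toSet, ENNReal.ofReal (|f x - f y| ^ p) ∂μ ∂μ) ^ (1 / p)

/-- `A_p(f; t : S)_{L_p(μ)}`. -/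
noncomputable def ApLp {n : ℕ} (μ : Measure (Fin n → ℝ)) (p : ℝ) (f : (Fin n → ℝ) → ℝ)
    (t : ℝ) (S : Set (Fin n → ℝ)) : ℝ≥0∞ :=
  ⨆ π ∈ {π : Finset (PCube n) | IsPacking π ∧ EqualDiam π ∧ (∀ Q ∈ π, Q.c ∈ S) ∧
      ∀ Q ∈ π, Q.diam ≤ t},
    (∑ Q ∈ π, ENNReal.ofReal Q.vol * oscLp μ p f Q ^ p) ^ (1 / p)

/-- `𝒜_{p,α}(f; t : S)_{L_p(μ)}`: over `α`-porous packings centered at the boundary of `S`. -/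
noncomputable def AcalLp {n : ℕ} (μ : Measure (Fin n → ℝ)) (p α : ℝ) (f : (Fin n → ℝ) → ℝ)
    (t : ℝ) (S : Set (Fin n → ℝ)) : ℝ≥0∞ :=
  ⨆ π ∈ {π : Finset (PCube n) | IsPacking π ∧ EqualDiam π ∧ (∀ Q ∈ π, Q.c ∈ frontier S) ∧
      (∀ Q ∈ π, Q.diam ≤ t) ∧ ∀ Q ∈ π, Porous α S Q},
    (∑ Q ∈ π, ENNReal.ofReal Q.vol * oscLp μ p f Q ^ p) ^ (1 / p)

/-- `ρ_{α,S}(x,y) ∈ [0,∞]`. -/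
noncomputable def rho {n : ℕ} (α : ℝ) (S : Set (Fin n → ℝ)) (x y : Fin n → ℝ) : ℝ≥0∞ :=
  sInf {d : ℝ≥0∞ | ∃ Q : PCube n, 0 < Q.r ∧ x ∈ Q.toSet ∧ y ∈ Q.toSet ∧
    (Q.scale α).toSet ⊆ Sᶜ ∧ d = ENNReal.ofReal Q.diam}

/-- The sharp maximal function `f^♯_{∞,S}`. -/
noncomputable def sharpMax {n : ℕ} (S : Set (Fin n → ℝ)) (f : (Fin n → ℝ) → ℝ)
    (x : Fin n → ℝ) : ℝ :=
  sSup {v : ℝ | ∃ r : ℝ, 0 < r ∧ ∃ y ∈ Metric.closedBall x r ∩ S,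
    ∃ z ∈ Metric.closedBall x r ∩ S, v = |f y - f z| / r}

/-- `supp μ = S`. -/
def IsSuppOn {n : ℕ} (μ : Measure (Fin n → ℝ)) (S : Set (Fin n → ℝ)) : Prop :=
  μ Sᶜ = 0 ∧ ∀ x ∈ S, ∀ r : ℝ, 0 < r → 0 < μ (Metric.closedBall x r)

/-- The doubling condition (1.12). -/
def Doubling {n : ℕ} (μ : Measure (Fin n → ℝ)) (S : Set (Fin n → ℝ)) (cμ : ℝ) : Prop :=
  ∀ x ∈ S, ∀ r : ℝ, 0 < r → r ≤ 1 / 2 →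
    μ (Metric.closedBall x (2 * r)) ≤ ENNReal.ofReal cμ * μ (Metric.closedBall x r)

/-- Condition `(D_n)` (1.11). -/
def CondDn {n : ℕ} (μ : Measure (Fin n → ℝ)) (S : Set (Fin n → ℝ)) (Cμ : ℝ) : Prop :=
  ∀ x ∈ S, ∀ r : ℝ, 0 < r → r ≤ 1 → ∀ k : ℝ, 1 ≤ k → k ≤ 1 / r →
    μ (Metric.closedBall x (k * r)) ≤ ENNReal.ofReal (Cμ * k ^ n) * μ (Metric.closedBall x r)

/-- The normalization condition (1.13). -/
def Normalized {n : ℕ} (μ : Measure (Fin n → ℝ)) (S : Set (Fin n → ℝ)) (C' C'' : ℝ) : Prop :=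
  ∀ x ∈ S, ENNReal.ofReal C' ≤ μ (Metric.closedBall x 1) ∧
    μ (Metric.closedBall x 1) ≤ ENNReal.ofReal C''

/-- The double integral over `{‖x−y‖ < t}` (before taking the `1/p` power). -/
noncomputable def I1 {n : ℕ} (μ : Measure (Fin n → ℝ)) (p : ℝ) (S : Set (Fin n → ℝ))
    (f : (Fin n → ℝ) → ℝ) (t : ℝ) : ℝ≥0∞ :=
  ∫⁻ x in S, ∫⁻ y in S,
    ({y : Fin n → ℝ | dist x y < t}.indicator
      (fun y => ENNReal.ofReal (|f x - f y| ^ p) * ENNReal.ofReal (t ^ ((n : ℝ) - p)) *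
        ((μ (Metric.closedBall x t))⁻¹) ^ 2)) y ∂μ ∂μ

/-- The double integral over `{ρ_{α,S}(x,y) < δ}` (before taking the `1/p` power). -/
noncomputable def I2 {n : ℕ} (μ : Measure (Fin n → ℝ)) (p α : ℝ) (S : Set (Fin n → ℝ))
    (f : (Fin n → ℝ) → ℝ) (δ : ℝ) : ℝ≥0∞ :=
  ∫⁻ x in S, ∫⁻ y in S,
    ({y : Fin n → ℝ | rho α S x y < ENNReal.ofReal δ}.indicator
      (fun y => ENNReal.ofReal (|f x - f y| ^ p) * rho α S x y ^ ((n : ℝ) - p) *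
        ((μ (Metric.closedBall x (rho α S x y).toReal))⁻¹) ^ 2)) y ∂μ ∂μ

/-! ### The maximal theorem -/

/-- Layer-cake formula for a single value `a`, including `a = ∞`. -/
lemma lintegral_layer {β : ℝ} (hβ : 0 < β) (a : ℝ≥0∞) :
    ∫⁻ t in Ioi (0 : ℝ), {t : ℝ | ENNReal.ofReal t < a}.indicator
      (fun t => ENNReal.ofReal (t ^ (β - 1))) t = ENNReal.ofReal β⁻¹ * a ^ β := by
  have key : ∀ b : NNReal, ∫⁻ t in Ioi (0 : ℝ), {t : ℝ | ENNReal.ofReal t < b}.indicator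
      (fun t => ENNReal.ofReal (t ^ (β - 1))) t = ENNReal.ofReal β⁻¹ * (b : ℝ≥0∞) ^ β := by
    intro b
    have hm : MeasurableSet {t : ℝ | ENNReal.ofReal t < b} :=
      measurableSet_lt ENNReal.measurable_ofReal measurable_const
    rw [lintegral_indicator hm, Measure.restrict_restrict hm]
    have hs : {t : ℝ | ENNReal.ofReal t < b} ∩ Ioi 0 = Ioo 0 (b : ℝ) := by
      ext t
      simp only [mem_inter_iff, mem_ofPred_eq, mem_Ioi, mem_Ioo]
      constructor
      · rintro ⟨h1, h2⟩
        refine ⟨h2, ?_⟩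
        have h3 : ENNReal.ofReal t < ENNReal.ofReal b := by simpa using h1
        exact (ENNReal.ofReal_lt_ofReal_iff_of_nonneg h2.le).1 h3
      · rintro ⟨h1, h2⟩
        refine ⟨?_, h1⟩
        have h3 := (ENNReal.ofReal_lt_ofReal_iff_of_nonneg h1.le).2 h2
        simpa using h3
    have hb : (0 : ℝ) ≤ b := b.2
    rw [hs, restrict_Ioo_eq_restrict_Ioc]
    have hint := (intervalIntegral.intervalIntegrable_rpow' (a := 0) (b := (b : ℝ))
      (show -1 < β - 1 by linarith))
    rw [← ofReal_integral_eq_lintegral_ofReal ((intervalIntegrable_iff_integrableOn_Ioc_of_le hb).1 hint)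
      ((ae_restrict_iff' measurableSet_Ioc).2 (.of_forall fun t ht => Real.rpow_nonneg ht.1.le _)),
      ← intervalIntegral.integral_of_le hb, integral_rpow (Or.inl (by linarith))]
    simp only [sub_add_cancel, Real.zero_rpow hβ.ne', sub_zero]
    rw [div_eq_inv_mul, ENNReal.ofReal_mul (inv_nonneg.2 hβ.le),
      ← ENNReal.ofReal_rpow_of_nonneg hb hβ.le, ENNReal.ofReal_coe_nnreal]
  induction a with
  | coe b => exact key b
  | top =>
    have : ENNReal.ofReal β⁻¹ * (⊤ : ℝ≥0∞) ^ β = ⊤ := by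
      rw [ENNReal.top_rpow_of_pos hβ, ENNReal.mul_top]
      simpa using hβ
    rw [this]
    -- compare with the finite values `(β M)^(1/β)`, for which the integral equals `M`
    refine ENNReal.eq_top_of_forall_nnreal_le fun M => ?_
    have h := key ((β.toNNReal * M) ^ (β⁻¹))
    rw [ENNReal.coe_rpow_of_nonneg _ (inv_nonneg.2 hβ.le), ← ENNReal.rpow_mul,
      inv_mul_cancel₀ hβ.ne', ENNReal.rpow_one, ENNReal.coe_mul, ← mul_assoc] at h
    have h1 : ENNReal.ofReal β⁻¹ * (β.toNNReal : ℝ≥0∞) = 1 := by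
      change ENNReal.ofReal β⁻¹ * ENNReal.ofReal β = 1
      rw [← ENNReal.ofReal_mul (inv_nonneg.2 hβ.le), inv_mul_cancel₀ hβ.ne', ENNReal.ofReal_one]
    rw [h1, one_mul] at h
    rw [← h]
    refine lintegral_mono fun t => indicator_le_indicator_of_subset ?_ (fun _ => zero_le) t
    intro t _
    exact ENNReal.ofReal_lt_top

/-- The centered Hardy–Littlewood maximal function, with the cubes restricted to dyadic radii so
that the supremum is countable. -/
noncomputable def maxFun {n : ℕ} (f : (Fin n → ℝ) → ℝ≥0∞) (x : Fin n → ℝ) : ℝ≥0∞ :=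
  ⨆ k : ℤ, (volume (closedBall x ((2 : ℝ) ^ k)))⁻¹ * ∫⁻ y in closedBall x ((2 : ℝ) ^ k), f y

lemma vol_cb {n : ℕ} (x : Fin n → ℝ) {r : ℝ} (hr : 0 ≤ r) :
    volume (closedBall x r) = ENNReal.ofReal ((2 * r) ^ n) := by
  simpa using Real.volume_pi_closedBall x hr

lemma vol_cb_ne_zero {n : ℕ} (x : Fin n → ℝ) {r : ℝ} (hr : 0 < r) :
    volume (closedBall x r) ≠ 0 := by
  rw [vol_cb x hr.le]
  simp only [ne_eq, ENNReal.ofReal_eq_zero, not_le]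
  positivity

lemma vol_cb_ne_top {n : ℕ} (x : Fin n → ℝ) (r : ℝ) : volume (closedBall x r) ≠ ⊤ :=
  measure_closedBall_lt_top.ne

lemma vol_cb_mul {n : ℕ} (x y : Fin n → ℝ) {a r : ℝ} (ha : 0 ≤ a) (hr : 0 ≤ r) :
    volume (closedBall x (a * r)) = ENNReal.ofReal (a ^ n) * volume (closedBall y r) := by
  rw [vol_cb x (mul_nonneg ha hr), vol_cb y hr, ← ENNReal.ofReal_mul (by positivity), ← mul_pow]
  ring_nf

lemma measurable_maxFun {n : ℕ} {f : (Fin n → ℝ) → ℝ≥0∞} (hf : Measurable f) :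
    Measurable (maxFun f) := by
  refine Measurable.iSup fun k => ?_
  have h0 : (0 : ℝ) ≤ 2 ^ k := by positivity
  simp only [vol_cb _ h0]
  refine Measurable.const_mul ?_ _
  have hs : MeasurableSet {q : (Fin n → ℝ) × (Fin n → ℝ) | dist q.2 q.1 ≤ (2 : ℝ) ^ k} :=
    measurableSet_le (by fun_prop) measurable_const
  have : (fun x => ∫⁻ y in closedBall x ((2 : ℝ) ^ k), f y) = fun x => ∫⁻ y,
      ({q : (Fin n → ℝ) × (Fin n → ℝ) | dist q.2 q.1 ≤ (2 : ℝ) ^ k}.indicator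
        (fun q => f q.2)) (x, y) := by
    funext x
    rw [← lintegral_indicator measurableSet_closedBall]
    rfl
  rw [this]
  exact Measurable.lintegral_prod_right' ((hf.comp measurable_snd).indicator hs)

lemma avg_le_maxFun {n : ℕ} (f : (Fin n → ℝ) → ℝ≥0∞) {c x : Fin n → ℝ} {r : ℝ} (hr : 0 < r)
    (hx : x ∈ closedBall c r) :
    (volume (closedBall c r))⁻¹ * ∫⁻ y in closedBall c r, f y
      ≤ ENNReal.ofReal (4 ^ n) * maxFun f x := by
  obtain ⟨k, hk1, hk2⟩ := exists_mem_Ioc_zpow (show (0 : ℝ) < 2 * r by positivity) one_lt_two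
  have h0 : (0 : ℝ) < 2 ^ (k + 1) := by positivity
  have hk3 : (2 : ℝ) ^ (k + 1) ≤ 4 * r := by
    rw [zpow_add_one₀ two_ne_zero]; linarith
  have hsub : closedBall c r ⊆ closedBall x ((2 : ℝ) ^ (k + 1)) := by
    refine closedBall_subset_closedBall' ?_
    rw [dist_comm]
    have := mem_closedBall.1 hx
    linarith
  have hvol : volume (closedBall x ((2 : ℝ) ^ (k + 1)))
      ≤ ENNReal.ofReal (4 ^ n) * volume (closedBall c r) := by
    rw [← vol_cb_mul x c (by norm_num) hr.le]
    exact measure_mono (closedBall_subset_closedBall hk3)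
  have h4 : ENNReal.ofReal (4 ^ n) ≠ 0 := by simp
  have hinv : (volume (closedBall c r))⁻¹
      ≤ ENNReal.ofReal (4 ^ n) * (volume (closedBall x ((2 : ℝ) ^ (k + 1))))⁻¹ := by
    rw [← div_eq_mul_inv, ENNReal.le_div_iff_mul_le (.inl (vol_cb_ne_zero x h0))
      (.inl (vol_cb_ne_top _ _)), mul_comm, ← div_eq_mul_inv]
    exact ENNReal.div_le_of_le_mul hvol
  calc _ ≤ (ENNReal.ofReal (4 ^ n) * (volume (closedBall x ((2 : ℝ) ^ (k + 1))))⁻¹) *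
        ∫⁻ y in closedBall x ((2 : ℝ) ^ (k + 1)), f y :=
        mul_le_mul' hinv (lintegral_mono_set hsub)
    _ ≤ _ := by
        rw [mul_assoc]
        gcongr
        exact le_iSup (fun k : ℤ => (volume (closedBall x ((2 : ℝ) ^ k)))⁻¹ *
          ∫⁻ y in closedBall x ((2 : ℝ) ^ k), f y) (k + 1)

/-- Weak type `(1,1)` bound for the maximal function, by the Vitali covering lemma. -/
lemma maxFun_weak {n : ℕ} (hn : 1 ≤ n) (f : (Fin n → ℝ) → ℝ≥0∞) {l : ℝ} (hl : 0 < l) :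
    volume {x | ENNReal.ofReal l < maxFun f x}
      ≤ ENNReal.ofReal (5 ^ n) * (ENNReal.ofReal l)⁻¹ * ∫⁻ x, f x := by
  have hl' : ENNReal.ofReal l ≠ 0 := by simpa using hl
  by_cases hI : ∫⁻ x, f x = ⊤
  · rw [hI, ENNReal.mul_top]
    · exact le_top
    · simp
  have hex : ∀ x : {x | ENNReal.ofReal l < maxFun f x}, ∃ k : ℤ,
      ENNReal.ofReal l < (volume (closedBall x.1 ((2 : ℝ) ^ k)))⁻¹ *
        ∫⁻ y in closedBall x.1 ((2 : ℝ) ^ k), f y := fun x => lt_iSup_iff.1 x.2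
  choose k hk using hex
  have hpos : ∀ x, (0 : ℝ) < 2 ^ k x := fun x => by positivity
  have hvol : ∀ x, volume (closedBall x.1 ((2 : ℝ) ^ k x)) ≤
      (ENNReal.ofReal l)⁻¹ * ∫⁻ y in closedBall x.1 ((2 : ℝ) ^ k x), f y := by
    intro x
    have h := (hk x).le
    rw [mul_comm, ← div_eq_mul_inv, ENNReal.le_div_iff_mul_le (.inl (vol_cb_ne_zero _ (hpos x)))
      (.inl (vol_cb_ne_top _ _))] at h
    rw [mul_comm, ← div_eq_mul_inv, ENNReal.le_div_iff_mul_le (.inl hl') (.inl ENNReal.ofReal_ne_top),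
      mul_comm]
    exact h
  -- the radii are bounded because the volumes are
  have hR : ∀ x ∈ (univ : Set {x | ENNReal.ofReal l < maxFun f x}), (2 : ℝ) ^ k x
      ≤ max 1 ((ENNReal.ofReal l)⁻¹ * ∫⁻ y, f y).toReal := by
    intro x _
    by_cases h1 : (2 : ℝ) ^ k x ≤ 1
    · exact h1.trans (le_max_left _ _)
    · refine le_max_of_le_right ?_
      push Not at h1
      have h2 := (hvol x).trans (mul_le_mul_right (setLIntegral_le_lintegral _ f) _)
      rw [vol_cb _ (hpos x).le, ENNReal.ofReal_le_iff_le_toReal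
        (ENNReal.mul_ne_top (by simpa using hl) hI)] at h2
      refine le_trans ?_ h2
      calc (2 : ℝ) ^ k x ≤ 2 * 2 ^ k x := by linarith
        _ ≤ (2 * 2 ^ k x) ^ n := le_self_pow₀ (by linarith) (by omega)
  obtain ⟨u, -, hu1, hu2⟩ := Vitali.exists_disjoint_subfamily_covering_enlargement_closedBall
    univ (fun x : {x | ENNReal.ofReal l < maxFun f x} => x.1) (fun x => (2 : ℝ) ^ k x) _ hR 5
    (by norm_num)
  have huc : u.Countable := hu1.countable_of_nonempty_interior fun x _ =>
    ⟨x.1, ball_subset_interior_closedBall (mem_ball_self (hpos x))⟩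
  calc volume {x | ENNReal.ofReal l < maxFun f x}
      ≤ volume (⋃ x ∈ u, closedBall x.1 (5 * (2 : ℝ) ^ k x)) := by
        refine measure_mono fun x hx => ?_
        obtain ⟨b, hb, hb'⟩ := hu2 ⟨x, hx⟩ (mem_univ _)
        exact mem_biUnion hb (hb' (mem_closedBall_self (hpos _).le))
    _ ≤ ∑' x : u, volume (closedBall x.1.1 (5 * (2 : ℝ) ^ k x)) := measure_biUnion_le _ huc _
    _ ≤ ∑' x : u, ENNReal.ofReal (5 ^ n) * ((ENNReal.ofReal l)⁻¹ *
          ∫⁻ y in closedBall x.1.1 ((2 : ℝ) ^ k x), f y) := by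
        refine ENNReal.tsum_le_tsum fun x => ?_
        rw [vol_cb_mul _ x.1.1 (by norm_num) (hpos _).le]
        gcongr
        exact hvol _
    _ = ENNReal.ofReal (5 ^ n) * ((ENNReal.ofReal l)⁻¹ *
          ∫⁻ y in ⋃ x ∈ u, closedBall x.1 ((2 : ℝ) ^ k x), f y) := by
        rw [ENNReal.tsum_mul_left, ENNReal.tsum_mul_left,
          lintegral_biUnion huc (fun _ _ => measurableSet_closedBall) hu1]
    _ ≤ _ := by
        rw [mul_assoc]
        gcongr
        exact Measure.restrict_le_self

/-- Removing the part of `f` below height `m` lowers the maximal function by at most `m`. -/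
lemma maxFun_split {n : ℕ} (f : (Fin n → ℝ) → ℝ≥0∞) (m : ℝ≥0∞) (x : Fin n → ℝ) :
    maxFun f x ≤ m + maxFun ({x | m < f x}.indicator f) x := by
  refine iSup_le fun k => ?_
  have h0 : (0 : ℝ) < 2 ^ k := by positivity
  calc _ ≤ (volume (closedBall x ((2 : ℝ) ^ k)))⁻¹ * ∫⁻ y in closedBall x ((2 : ℝ) ^ k),
        (m + {x | m < f x}.indicator f y) := by
        gcongr with y
        by_cases hy : m < f y
        · rw [indicator_of_mem (by exact hy)]; exact le_add_self
        · rw [indicator_of_notMem (by exact hy), add_zero]; exact not_lt.1 hy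
    _ = m + (volume (closedBall x ((2 : ℝ) ^ k)))⁻¹ * ∫⁻ y in closedBall x ((2 : ℝ) ^ k),
        {x | m < f x}.indicator f y := by
        rw [lintegral_add_left measurable_const, lintegral_const, Measure.restrict_apply_univ,
          mul_add, mul_comm m, ← mul_assoc, ENNReal.inv_mul_cancel (vol_cb_ne_zero _ h0)
          (vol_cb_ne_top _ _), one_mul]
    _ ≤ _ := by
        gcongr
        exact le_iSup (fun k : ℤ => (volume (closedBall x ((2 : ℝ) ^ k)))⁻¹ *
          ∫⁻ y in closedBall x ((2 : ℝ) ^ k), {x | m < f x}.indicator f y) k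

/-- Strong type `(s,s)` bound for the maximal function, `s > 1`, obtained from the weak type bound
applied at each height `t` to the part of `f` exceeding `t / 2`. -/
lemma maxFun_strong {n : ℕ} (hn : 1 ≤ n) {s : ℝ} (hs : 1 < s) :
    ∃ C : ℝ≥0∞, C ≠ ⊤ ∧ ∀ f : (Fin n → ℝ) → ℝ≥0∞, Measurable f → (∀ x, f x ≠ ⊤) →
      ∫⁻ x, maxFun f x ^ s ≤ C * ∫⁻ x, f x ^ s := by
  have hs0 : 0 < s := by linarith
  refine ⟨ENNReal.ofReal s * (ENNReal.ofReal (5 ^ n) * 2 *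
    (ENNReal.ofReal (s - 1)⁻¹ * 2 ^ (s - 1))), by finiteness, fun f hf hfin => ?_⟩
  have hM := measurable_maxFun hf
  have e1 : ∀ x, maxFun f x ^ s = ENNReal.ofReal s * ∫⁻ t in Ioi (0 : ℝ),
      {t : ℝ | ENNReal.ofReal t < maxFun f x}.indicator
        (fun t => ENNReal.ofReal (t ^ (s - 1))) t := by
    intro x
    rw [lintegral_layer hs0, ← mul_assoc, ← ENNReal.ofReal_mul hs0.le, mul_inv_cancel₀ hs0.ne',
      ENNReal.ofReal_one, one_mul]
  have e2 : ∀ x, f x * (ENNReal.ofReal (s - 1)⁻¹ * (2 * f x) ^ (s - 1)) = ∫⁻ t in Ioi (0 : ℝ),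
      f x * {t : ℝ | ENNReal.ofReal t < 2 * f x}.indicator
        (fun t => ENNReal.ofReal (t ^ (s - 1 - 1))) t := by
    intro x
    rw [lintegral_const_mul' _ _ (hfin x), lintegral_layer (by linarith)]
  have hmeas1 : Measurable (fun q : (Fin n → ℝ) × ℝ =>
      {t : ℝ | ENNReal.ofReal t < maxFun f q.1}.indicator
        (fun t => ENNReal.ofReal (t ^ (s - 1))) q.2) := by
    have hset : MeasurableSet {q : (Fin n → ℝ) × ℝ | ENNReal.ofReal q.2 < maxFun f q.1} :=
      measurableSet_lt (by fun_prop) (hM.comp measurable_fst)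
    exact Measurable.indicator (f := fun q : (Fin n → ℝ) × ℝ => ENNReal.ofReal (q.2 ^ (s - 1)))
      (by fun_prop) hset
  have hmeas2 : Measurable (fun q : (Fin n → ℝ) × ℝ =>
      f q.1 * {t : ℝ | ENNReal.ofReal t < 2 * f q.1}.indicator
        (fun t => ENNReal.ofReal (t ^ (s - 1 - 1))) q.2) := by
    have hset : MeasurableSet {q : (Fin n → ℝ) × ℝ | ENNReal.ofReal q.2 < 2 * f q.1} :=
      measurableSet_lt (by fun_prop) ((hf.comp measurable_fst).const_mul 2)
    refine (hf.comp measurable_fst).mul ?_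
    exact Measurable.indicator (f := fun q : (Fin n → ℝ) × ℝ => ENNReal.ofReal (q.2 ^ (s - 1 - 1)))
      (by fun_prop) hset
  simp_rw [e1]
  rw [lintegral_const_mul' _ _ ENNReal.ofReal_ne_top, lintegral_lintegral_swap hmeas1.aemeasurable]
  have step : ∀ t ∈ Ioi (0 : ℝ),
      ∫⁻ x, {t : ℝ | ENNReal.ofReal t < maxFun f x}.indicator
        (fun t => ENNReal.ofReal (t ^ (s - 1))) t
      ≤ ENNReal.ofReal (5 ^ n) * 2 * ∫⁻ x, f x * {t : ℝ | ENNReal.ofReal t < 2 * f x}.indicator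
        (fun t => ENNReal.ofReal (t ^ (s - 1 - 1))) t := by
    intro t ht
    have ht : 0 < t := ht
    have ht2 : ENNReal.ofReal t = ENNReal.ofReal (t / 2) + ENNReal.ofReal (t / 2) := by
      rw [← ENNReal.ofReal_add (by positivity) (by positivity), add_halves]
    have hsub : {x | ENNReal.ofReal t < maxFun f x} ⊆ {x | ENNReal.ofReal (t / 2) <
        maxFun ({x | ENNReal.ofReal (t / 2) < f x}.indicator f) x} := by
      intro x hx
      have h := lt_of_lt_of_le hx (maxFun_split f (ENNReal.ofReal (t / 2)) x)
      rw [ht2] at h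
      exact lt_of_add_lt_add_left h
    have hset : MeasurableSet {x | ENNReal.ofReal (t / 2) < f x} :=
      measurableSet_lt measurable_const hf
    have hiff : ∀ x, ENNReal.ofReal (t / 2) < f x ↔ ENNReal.ofReal t < 2 * f x := by
      intro x
      rw [ENNReal.ofReal_div_of_pos two_pos, ENNReal.ofReal_ofNat,
        ENNReal.div_lt_iff (by simp) (by simp), mul_comm]
    calc _ = ENNReal.ofReal (t ^ (s - 1)) * volume {x | ENNReal.ofReal t < maxFun f x} := by
          rw [← lintegral_indicator_const (measurableSet_lt measurable_const hM)]
          rfl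
      _ ≤ ENNReal.ofReal (t ^ (s - 1)) * (ENNReal.ofReal (5 ^ n) * (ENNReal.ofReal (t / 2))⁻¹ *
            ∫⁻ x, {x | ENNReal.ofReal (t / 2) < f x}.indicator f x) := by
          gcongr
          exact (measure_mono hsub).trans (maxFun_weak hn _ (by positivity))
      _ = ENNReal.ofReal (5 ^ n) * 2 * (ENNReal.ofReal (t ^ (s - 1 - 1)) *
            ∫⁻ x, {x | ENNReal.ofReal (t / 2) < f x}.indicator f x) := by
          have : ENNReal.ofReal (t ^ (s - 1)) * (ENNReal.ofReal (t / 2))⁻¹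
              = 2 * ENNReal.ofReal (t ^ (s - 1 - 1)) := by
            rw [← ENNReal.ofReal_inv_of_pos (by positivity), ← ENNReal.ofReal_mul (by positivity),
              Real.rpow_sub_one ht.ne' (s - 1), ← ENNReal.ofReal_ofNat 2,
              ← ENNReal.ofReal_mul (by positivity)]
            congr 1
            field_simp
          rw [mul_assoc, mul_left_comm, ← mul_assoc (ENNReal.ofReal (t ^ (s - 1))), this]
          ring
      _ = _ := by
          rw [← lintegral_const_mul' _ _ ENNReal.ofReal_ne_top]
          congr 2
          funext x
          by_cases hx : ENNReal.ofReal (t / 2) < f x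
          · rw [indicator_of_mem (by exact hx), indicator_of_mem (by exact (hiff x).1 hx), mul_comm]
          · rw [indicator_of_notMem (by exact hx),
              indicator_of_notMem (by exact fun h => hx ((hiff x).2 h)), mul_zero, mul_zero]
  have hswap := lintegral_lintegral_swap (μ := (volume : Measure (Fin n → ℝ)))
    (ν := volume.restrict (Ioi (0 : ℝ)))
    (f := fun x t => f x * {t : ℝ | ENNReal.ofReal t < 2 * f x}.indicator
        (fun t => ENNReal.ofReal (t ^ (s - 1 - 1))) t) hmeas2.aemeasurable
  calc _ ≤ ENNReal.ofReal s * ∫⁻ t in Ioi (0 : ℝ), (ENNReal.ofReal (5 ^ n) * 2 *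
        ∫⁻ x, f x * {t : ℝ | ENNReal.ofReal t < 2 * f x}.indicator
          (fun t => ENNReal.ofReal (t ^ (s - 1 - 1))) t) := by
        gcongr 1
        exact setLIntegral_mono' measurableSet_Ioi step
    _ = ENNReal.ofReal s * (ENNReal.ofReal (5 ^ n) * 2 *
          ∫⁻ x, f x * (ENNReal.ofReal (s - 1)⁻¹ * (2 * f x) ^ (s - 1))) := by
        rw [lintegral_const_mul' _ _ (by finiteness), ← hswap]
        simp_rw [e2]
    _ = _ := by
        have : ∀ x, f x * (ENNReal.ofReal (s - 1)⁻¹ * (2 * f x) ^ (s - 1))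
            = (ENNReal.ofReal (s - 1)⁻¹ * 2 ^ (s - 1)) * f x ^ s := by
          intro x
          rw [ENNReal.mul_rpow_of_nonneg _ _ (by linarith)]
          have : f x ^ s = f x * f x ^ (s - 1) := by
            conv_lhs => rw [show s = 1 + (s - 1) by ring]
            rw [ENNReal.rpow_add_of_nonneg _ _ zero_le_one (by linarith), ENNReal.rpow_one]
          rw [this]
          ring
        simp_rw [this]
        rw [lintegral_const_mul' _ _ (by finiteness)]
        ring

/-! ### Morrey's inequality -/

lemma continuous_gradNorm {n : ℕ} {F : (Fin n → ℝ) → ℝ} (hF : ContDiff ℝ 1 F) :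
    Continuous (gradNorm F) := by
  have h := hF.continuous_fderiv one_ne_zero
  exact (continuous_pi fun i => h.clm_apply continuous_const).norm

lemma abs_fderiv_le {n : ℕ} (F : (Fin n → ℝ) → ℝ) (x v : Fin n → ℝ) :
    ‖fderiv ℝ F x v‖ ≤ n * ‖v‖ * gradNorm F x := by
  have hv : v = ∑ i, v i • (Pi.single i (1 : ℝ) : Fin n → ℝ) := by
    conv_lhs => rw [← Finset.univ_sum_single v]
    refine Finset.sum_congr rfl fun i _ => ?_
    rw [← Pi.single_smul]; simp
  conv_lhs => rw [hv, map_sum]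
  calc _ ≤ ∑ i : Fin n, ‖fderiv ℝ F x (v i • (Pi.single i (1 : ℝ) : Fin n → ℝ))‖ :=
        norm_sum_le _ _
    _ ≤ ∑ i : Fin n, ‖v‖ * gradNorm F x := by
        refine Finset.sum_le_sum fun i _ => ?_
        rw [map_smul, norm_smul]
        refine mul_le_mul (norm_le_pi_norm v i) ?_ (norm_nonneg _) (norm_nonneg _)
        exact norm_le_pi_norm (fun i : Fin n => fderiv ℝ F x (Pi.single i 1)) i
    _ = _ := by simp [mul_assoc]

/-- Fundamental theorem of calculus along the segment from `x` to `z`. -/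
lemma enorm_sub_le_lintegral {n : ℕ} {F : (Fin n → ℝ) → ℝ} (hF : ContDiff ℝ 1 F)
    (x z : Fin n → ℝ) :
    ‖F z - F x‖ₑ ≤ (n * ‖z - x‖ₑ) * ∫⁻ s in Ioc (0 : ℝ) 1, ‖gradNorm F (x + s • (z - x))‖ₑ := by
  have hd : ∀ s : ℝ, HasDerivAt (fun s : ℝ => F (x + s • (z - x)))
      (fderiv ℝ F (x + s • (z - x)) (z - x)) s := by
    intro s
    have h1 : HasDerivAt (fun s : ℝ => x + s • (z - x)) (z - x) s := by
      simpa using ((hasDerivAt_id s).smul_const (z - x)).const_add x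
    exact ((hF.differentiable one_ne_zero _).hasFDerivAt).comp_hasDerivAt s h1
  have hc : Continuous fun s : ℝ => fderiv ℝ F (x + s • (z - x)) (z - x) :=
    ((hF.continuous_fderiv one_ne_zero).comp (by fun_prop)).clm_apply continuous_const
  have hftc := intervalIntegral.integral_eq_sub_of_hasDerivAt (a := 0) (b := 1)
    (fun s _ => hd s) (hc.intervalIntegrable _ _)
  simp only [one_smul, add_sub_cancel, zero_smul, add_zero] at hftc
  rw [← hftc, intervalIntegral.integral_of_le zero_le_one,
    ← lintegral_const_mul' _ _ (by finiteness)]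
  refine (enorm_integral_le_lintegral_enorm _).trans (lintegral_mono fun s => ?_)
  have h := abs_fderiv_le F (x + s • (z - x)) (z - x)
  have h2 := ENNReal.ofReal_le_ofReal h
  rw [ofReal_norm, ENNReal.ofReal_mul (by positivity), ENNReal.ofReal_mul (by positivity),
    ofReal_norm, ENNReal.ofReal_natCast] at h2
  rwa [Real.enorm_of_nonneg (show 0 ≤ gradNorm F (x + s • (z - x)) from norm_nonneg _)]

/-- The homothety `z ↦ x + s (z - x)` maps a cube containing `x` into itself and scales Lebesgue
measure by `sⁿ`. -/
lemma lintegral_homothety_le {n : ℕ} {h : (Fin n → ℝ) → ℝ≥0∞} (hh : Measurable h)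
    {c x : Fin n → ℝ} {r s : ℝ} (hx : x ∈ closedBall c r) (hs0 : 0 < s) (hs1 : s ≤ 1) :
    ∫⁻ z in closedBall c r, h (x + s • (z - x))
      ≤ ENNReal.ofReal ((s ^ n)⁻¹) * ∫⁻ z in closedBall c r, h z := by
  set g := (closedBall c r).indicator h with hg
  have hgm : Measurable g := hh.indicator measurableSet_closedBall
  calc ∫⁻ z in closedBall c r, h (x + s • (z - x))
      = ∫⁻ z in closedBall c r, g (x + s • (z - x)) := by
        refine setLIntegral_congr_fun measurableSet_closedBall fun z hz => ?_
        have := (convex_closedBall c r).add_smul_sub_mem hx hz ⟨hs0.le, hs1⟩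
        simp only [hg]
        rw [indicator_of_mem this]
    _ ≤ ∫⁻ z, g (x + s • (z - x)) := setLIntegral_le_lintegral _ _
    _ = ∫⁻ z, g ((x - s • x) + s • z) := by
        congr 1; funext z; congr 1; rw [smul_sub]; abel
    _ = ∫⁻ w, g ((x - s • x) + w) ∂(Measure.map (s • ·) (volume : Measure (Fin n → ℝ))) := by
        rw [lintegral_map (f := fun w => g ((x - s • x) + w)) (hgm.comp (measurable_const_add _)) (measurable_const_smul s)]
    _ = ENNReal.ofReal ((s ^ n)⁻¹) * ∫⁻ z in closedBall c r, h z := by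
        rw [Measure.map_addHaar_smul _ hs0.ne', lintegral_smul_measure,
          lintegral_add_left_eq_self g, lintegral_indicator measurableSet_closedBall]
        simp [abs_of_pos hs0]

/-- Hölder's inequality against the constant function `1`. -/
lemma lintegral_le_rpow {E : Type*} [MeasurableSpace E] (μ : Measure E) {q : ℝ} (hq : 1 < q)
    {g : E → ℝ≥0∞} (hg : Measurable g) :
    ∫⁻ z, g z ∂μ ≤ (∫⁻ z, g z ^ q ∂μ) ^ (1 / q) * μ univ ^ (1 - 1 / q) := by
  have hc := Real.HolderConjugate.conjExponent hq
  have h := ENNReal.lintegral_mul_le_Lp_mul_Lq μ hc hg.aemeasurable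
    (measurable_const (a := (1 : ℝ≥0∞))).aemeasurable
  have e : 1 / q.conjExponent = 1 - 1 / q := by
    have := hc.inv_add_inv_eq_one
    simp only [one_div]; linarith
  simpa [e] using h

/-- The integral of `|F z - F x|` over a cube containing `x` is controlled by the `L^q` mean of the
gradient; convergence of `∫₀¹ s^(-n/q) ds` is where `q > n` enters. -/
lemma lintegral_enorm_sub_le {n : ℕ} {q : ℝ} (hq1 : 1 < q) (hqn : (n : ℝ) < q) :
    ∃ K : ℝ≥0∞, K ≠ ⊤ ∧ ∀ F : (Fin n → ℝ) → ℝ, ContDiff ℝ 1 F → ∀ (c x : Fin n → ℝ) (r : ℝ),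
      0 < r → x ∈ closedBall c r →
      ∫⁻ z in closedBall c r, ‖F z - F x‖ₑ ≤ K * ENNReal.ofReal r *
        ((∫⁻ z in closedBall c r, ‖gradNorm F z‖ₑ ^ q) ^ (1 / q) *
          volume (closedBall c r) ^ (1 - 1 / q)) := by
  have hq0 : 0 < q := by linarith
  have hfin : ∫⁻ s in Ioc (0 : ℝ) 1, ENNReal.ofReal (s ^ (-(n / q))) ≠ ⊤ := by
    have hlt : -1 < -((n : ℝ) / q) := by
      rw [neg_lt_neg_iff, div_lt_one hq0]; exact hqn
    have h := (intervalIntegrable_iff_integrableOn_Ioc_of_le zero_le_one).1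
      (intervalIntegral.intervalIntegrable_rpow' (a := 0) (b := 1) hlt)
    exact h.lintegral_lt_top.ne
  refine ⟨n * 2 * ∫⁻ s in Ioc (0 : ℝ) 1, ENNReal.ofReal (s ^ (-(n / q))), by finiteness, ?_⟩
  intro F hF c x r hr hx
  have hG : Measurable fun z => ‖gradNorm F z‖ₑ := (continuous_gradNorm hF).measurable.enorm
  set I := ∫⁻ z in closedBall c r, ‖gradNorm F z‖ₑ ^ q with hI
  set V := volume (closedBall c r) with hV
  have hm : Measurable fun w : (Fin n → ℝ) × ℝ => ‖gradNorm F (x + w.2 • (w.1 - x))‖ₑ :=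
    hG.comp (by fun_prop)
  have inner : ∀ s ∈ Ioc (0 : ℝ) 1, ∫⁻ z in closedBall c r, ‖gradNorm F (x + s • (z - x))‖ₑ
      ≤ ENNReal.ofReal (s ^ (-(n / q))) * (I ^ (1 / q) * V ^ (1 - 1 / q)) := by
    intro s hs
    have h1 := lintegral_le_rpow (volume.restrict (closedBall c r)) hq1
      (g := fun z => ‖gradNorm F (x + s • (z - x))‖ₑ) (hG.comp (by fun_prop))
    rw [Measure.restrict_apply_univ] at h1
    refine h1.trans ?_
    rw [← mul_assoc]
    gcongr
    refine (ENNReal.rpow_le_rpow (lintegral_homothety_le (hG.pow_const q) hx hs.1 hs.2)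
      (by positivity)).trans (le_of_eq ?_)
    rw [ENNReal.mul_rpow_of_nonneg _ _ (by positivity), ENNReal.ofReal_rpow_of_nonneg
      (by have := hs.1; positivity) (by positivity)]
    congr 2
    rw [← Real.rpow_natCast, ← Real.rpow_neg hs.1.le, ← Real.rpow_mul hs.1.le]
    congr 1
    ring
  calc ∫⁻ z in closedBall c r, ‖F z - F x‖ₑ
      ≤ ∫⁻ z in closedBall c r, (n * (2 * ENNReal.ofReal r)) *
          ∫⁻ s in Ioc (0 : ℝ) 1, ‖gradNorm F (x + s • (z - x))‖ₑ := by
        refine setLIntegral_mono' measurableSet_closedBall fun z hz => ?_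
        refine (enorm_sub_le_lintegral hF x z).trans ?_
        gcongr
        rw [← ofReal_norm, ← dist_eq_norm, ← ENNReal.ofReal_ofNat 2,
          ← ENNReal.ofReal_mul zero_le_two]
        refine ENNReal.ofReal_le_ofReal ?_
        have h1 := dist_triangle_right z x c
        have h2 := mem_closedBall.1 hz
        have h3 := mem_closedBall.1 hx
        linarith
    _ = (n * (2 * ENNReal.ofReal r)) * ∫⁻ s in Ioc (0 : ℝ) 1,
          ∫⁻ z in closedBall c r, ‖gradNorm F (x + s • (z - x))‖ₑ := by
        rw [lintegral_const_mul' _ _ (by finiteness),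
          lintegral_lintegral_swap (f := fun z s => ‖gradNorm F (x + s • (z - x))‖ₑ)
            hm.aemeasurable]
    _ ≤ (n * (2 * ENNReal.ofReal r)) * ∫⁻ s in Ioc (0 : ℝ) 1,
          ENNReal.ofReal (s ^ (-(n / q))) * (I ^ (1 / q) * V ^ (1 - 1 / q)) := by
        gcongr 1
        exact setLIntegral_mono' measurableSet_Ioc inner
    _ = _ := by
        rw [lintegral_mul_const _ (by fun_prop)]
        ring

/-- Morrey's inequality on a cube. -/
lemma morrey {n : ℕ} {q : ℝ} (hq1 : 1 < q) (hqn : (n : ℝ) < q) :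
    ∃ K : ℝ≥0∞, K ≠ ⊤ ∧ ∀ F : (Fin n → ℝ) → ℝ, ContDiff ℝ 1 F → ∀ (c x y : Fin n → ℝ) (r : ℝ),
      0 < r → x ∈ closedBall c r → y ∈ closedBall c r →
      ‖F x - F y‖ₑ ≤ K * ENNReal.ofReal r *
        ((volume (closedBall c r))⁻¹ * ∫⁻ z in closedBall c r, ‖gradNorm F z‖ₑ ^ q) ^ (1 / q) := by
  obtain ⟨K, hK, h⟩ := lintegral_enorm_sub_le (n := n) hq1 hqn
  have hq0 : 0 < q := by linarith
  refine ⟨2 * K, by finiteness, fun F hF c x y r hr hx hy => ?_⟩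
  have hV0 := vol_cb_ne_zero c hr
  have hVt := vol_cb_ne_top c r
  have hFc := hF.continuous
  set V := volume (closedBall c r) with hV
  set I := ∫⁻ z in closedBall c r, ‖gradNorm F z‖ₑ ^ q with hI
  have h1 : V * ‖F x - F y‖ₑ ≤ 2 * (K * ENNReal.ofReal r * (I ^ (1 / q) * V ^ (1 - 1 / q))) := by
    calc V * ‖F x - F y‖ₑ = ∫⁻ z in closedBall c r, ‖F x - F y‖ₑ := by
          rw [lintegral_const, Measure.restrict_apply_univ, mul_comm]
      _ ≤ ∫⁻ z in closedBall c r, (‖F z - F x‖ₑ + ‖F z - F y‖ₑ) := by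
          refine lintegral_mono fun z => ?_
          have e : F x - F y = -(F z - F x) + (F z - F y) := by ring
          calc ‖F x - F y‖ₑ = ‖-(F z - F x) + (F z - F y)‖ₑ := by rw [← e]
            _ ≤ _ := (enorm_add_le _ _).trans (by rw [enorm_neg])
      _ = (∫⁻ z in closedBall c r, ‖F z - F x‖ₑ) + ∫⁻ z in closedBall c r, ‖F z - F y‖ₑ :=
          lintegral_add_left (by fun_prop) _
      _ ≤ _ := by
          rw [two_mul]
          exact add_le_add (h F hF c x r hr hx) (h F hF c y r hr hy)
  have h2 : V ^ (1 - 1 / q) = V * V⁻¹ ^ (1 / q) := by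
    rw [ENNReal.rpow_sub _ _ hV0 hVt, ENNReal.rpow_one, ENNReal.inv_rpow, div_eq_mul_inv]
  rw [ENNReal.mul_rpow_of_nonneg _ _ (by positivity)]
  rw [h2] at h1
  refine (ENNReal.mul_le_mul_iff_right hV0 hVt).1 (h1.trans (le_of_eq ?_))
  ring

/-! ### Porous packings -/

lemma ofReal_osc_le {n : ℕ} {f : (Fin n → ℝ) → ℝ} {U : Set (Fin n → ℝ)} {e : ℝ≥0∞}
    (h : ∀ y ∈ U, ∀ z ∈ U, ‖f y - f z‖ₑ ≤ e) : ENNReal.ofReal (osc f U) ≤ e := by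
  by_cases he : e = ⊤
  · rw [he]; exact le_top
  refine ENNReal.ofReal_le_of_le_toReal (Real.sSup_le ?_ ENNReal.toReal_nonneg)
  rintro _ ⟨⟨y, z⟩, ⟨hy, hz⟩, rfl⟩
  have := h y hy z hz
  rw [← ofReal_norm, ENNReal.ofReal_le_iff_le_toReal he] at this
  exact this

lemma osc_nonneg {n : ℕ} (f : (Fin n → ℝ) → ℝ) (U : Set (Fin n → ℝ)) : 0 ≤ osc f U := by
  refine Real.sSup_nonneg ?_
  rintro _ ⟨q, -, rfl⟩
  exact abs_nonneg _

/-- A porous cube centered in `S` contains a cube of comparable size all of whose points lie at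
distance comparable to the radius from `S`. -/
lemma Porous.exists_hole {n : ℕ} {α : ℝ} (hα : 0 < α) {S : Set (Fin n → ℝ)} {Q : PCube n}
    (hr : 0 < Q.r) (hc : Q.c ∈ S) (hQ : Porous α S Q) :
    ∃ H : Set (Fin n → ℝ), MeasurableSet H ∧ H ⊆ Q.toSet ∧
      volume Q.toSet ≤ ENNReal.ofReal ((2 / α) ^ n) * volume H ∧
      ∀ x ∈ H, α * Q.r / 2 ≤ infDist x S ∧ infDist x S ≤ Q.r := by
  obtain ⟨Q', hr', hsub, hd⟩ := hQ
  have hle : α * Q.r ≤ Q'.r := by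
    simp only [PCube.diam] at hd; linarith
  have hpos : 0 < α * Q.r := mul_pos hα hr
  have hHQ' : closedBall Q'.c (α * Q.r / 2) ⊆ Q'.toSet :=
    closedBall_subset_closedBall (by linarith)
  refine ⟨closedBall Q'.c (α * Q.r / 2), measurableSet_closedBall,
    hHQ'.trans fun x hx => (hsub hx).1, le_of_eq ?_, fun x hx => ⟨?_, ?_⟩⟩
  · rw [← vol_cb_mul Q.c _ (by positivity) (by positivity), PCube.toSet]
    congr 2
    field_simp
  · rw [le_infDist ⟨_, hc⟩]
    intro y hy
    have hy' : y ∉ Q'.toSet := fun h => (hsub h).2 hy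
    have h1 : Q'.r < dist y Q'.c := not_le.1 hy'
    have h2 := mem_closedBall.1 hx
    have h3 := dist_triangle_left y Q'.c x
    linarith
  · exact (infDist_le_dist_of_mem hc).trans (mem_closedBall.1 (hsub (hHQ' hx)).1)

/-- Each admissible packing sum is dominated by an integral over the `t`-neighbourhood of `S`: on the
hole of a cube of radius `r` the weight `dist(x, S)` is comparable to `r`, and the maximal function
of `|∇F|^q` dominates the oscillation by Morrey's inequality. -/
lemma apPorous_rpow_le {n : ℕ} {p q α : ℝ} (hq1 : 1 < q) (hqn : (n : ℝ) < q) (hp : 0 < p)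
    (hα : 0 < α) :
    ∃ A : ℝ≥0∞, A ≠ ⊤ ∧ ∀ (S : Set (Fin n → ℝ)) (F : (Fin n → ℝ) → ℝ), ContDiff ℝ 1 F →
      ∀ t : ℝ, ApPorous p α F t S ^ p ≤ A * ∫⁻ x in {x | infDist x S ≤ t},
        ENNReal.ofReal (infDist x S) ^ p *
          maxFun (fun z => ‖gradNorm F z‖ₑ ^ q) x ^ (p / q) := by
  obtain ⟨K, hK, hmor⟩ := morrey (n := n) hq1 hqn
  have hq0 : 0 < q := by linarith
  set B : ℝ≥0∞ := K * ENNReal.ofReal (2 / α) * ENNReal.ofReal (4 ^ n) ^ (1 / q) with hB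
  have hBt : B ≠ ⊤ := by finiteness
  refine ⟨ENNReal.ofReal ((2 / α) ^ n) * B ^ p, by finiteness, fun S F hF t => ?_⟩
  set M := maxFun (fun z => ‖gradNorm F z‖ₑ ^ q) with hM
  set N : (Fin n → ℝ) → ℝ≥0∞ := fun x => ENNReal.ofReal (infDist x S) ^ p * M x ^ (p / q) with hN
  have hMm : Measurable M :=
    measurable_maxFun ((continuous_gradNorm hF).measurable.enorm.pow_const q)
  have hNm : Measurable N :=
    ((measurable_infDist.ennreal_ofReal).pow_const p).mul (hMm.pow_const _)
  have key : ApPorous p α F t S ≤ (ENNReal.ofReal ((2 / α) ^ n) * B ^ p *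
      ∫⁻ x in {x | infDist x S ≤ t}, N x) ^ (1 / p) := by
    refine iSup₂_le fun π hπ => ?_
    obtain ⟨⟨hpos, hdisj⟩, -, hc, hdiam, hpor⟩ := hπ
    choose! H hHm hHsub hHvol hHd using fun Q (hQ : Q ∈ π) =>
      (hpor Q hQ).exists_hole hα (hpos Q hQ) (hc Q hQ)
    have hvn : ∀ Q ∈ π, 0 ≤ Q.vol := fun Q hQ => by
      have := hpos Q hQ
      simp only [PCube.vol]; positivity
    have hterm : ∀ Q ∈ π, 0 ≤ Q.vol * osc F (Q.toSet ∩ S) ^ p := fun Q hQ =>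
      mul_nonneg (hvn Q hQ) (Real.rpow_nonneg (osc_nonneg _ _) _)
    rw [← ENNReal.ofReal_rpow_of_nonneg (Finset.sum_nonneg hterm) (by positivity),
      ENNReal.ofReal_sum_of_nonneg hterm]
    refine ENNReal.rpow_le_rpow ?_ (by positivity)
    have hone : ∀ Q ∈ π, ENNReal.ofReal (Q.vol * osc F (Q.toSet ∩ S) ^ p)
        ≤ ENNReal.ofReal ((2 / α) ^ n) * B ^ p * ∫⁻ x in H Q, N x := by
      intro Q hQ
      have hr := hpos Q hQ
      have hosc : ∀ x ∈ H Q, ENNReal.ofReal (osc F (Q.toSet ∩ S)) ^ p ≤ B ^ p * N x := by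
        intro x hx
        have h1 : ENNReal.ofReal (osc F (Q.toSet ∩ S)) ≤
            B * ENNReal.ofReal (infDist x S) * M x ^ (1 / q) := by
          refine ofReal_osc_le fun y hy z hz => ?_
          refine (hmor F hF Q.c y z Q.r hr hy.1 hz.1).trans ?_
          have h2 := ENNReal.rpow_le_rpow (z := 1 / q) (avg_le_maxFun
            (fun z => ‖gradNorm F z‖ₑ ^ q) hr (hHsub Q hQ hx)) (by positivity)
          rw [ENNReal.mul_rpow_of_nonneg (ENNReal.ofReal (4 ^ n)) _ (by positivity)] at h2
          have h3 : ENNReal.ofReal Q.r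
              ≤ ENNReal.ofReal (2 / α) * ENNReal.ofReal (infDist x S) := by
            rw [← ENNReal.ofReal_mul (by positivity)]
            refine ENNReal.ofReal_le_ofReal ?_
            have h4 := (hHd Q hQ x hx).1
            rw [div_mul_eq_mul_div, le_div_iff₀ hα]
            linarith
          calc _ ≤ K * (ENNReal.ofReal (2 / α) * ENNReal.ofReal (infDist x S)) *
                (ENNReal.ofReal (4 ^ n) ^ (1 / q) * M x ^ (1 / q)) := by gcongr
            _ = _ := by rw [hB]; ring
        refine (ENNReal.rpow_le_rpow h1 hp.le).trans (le_of_eq ?_)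
        rw [ENNReal.mul_rpow_of_nonneg _ _ hp.le, ENNReal.mul_rpow_of_nonneg _ _ hp.le,
          ← ENNReal.rpow_mul, mul_assoc, hN, one_div_mul_eq_div]
      calc ENNReal.ofReal (Q.vol * osc F (Q.toSet ∩ S) ^ p)
          = volume Q.toSet * ENNReal.ofReal (osc F (Q.toSet ∩ S)) ^ p := by
            rw [ENNReal.ofReal_mul (hvn Q hQ),
              ENNReal.ofReal_rpow_of_nonneg (osc_nonneg _ _) hp.le, PCube.toSet, vol_cb _ hr.le]
            rfl
        _ ≤ ENNReal.ofReal ((2 / α) ^ n) * volume (H Q) *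
              ENNReal.ofReal (osc F (Q.toSet ∩ S)) ^ p := by
            gcongr
            exact hHvol Q hQ
        _ = ENNReal.ofReal ((2 / α) ^ n) *
              ∫⁻ x in H Q, ENNReal.ofReal (osc F (Q.toSet ∩ S)) ^ p := by
            rw [lintegral_const, Measure.restrict_apply_univ]; ring
        _ ≤ ENNReal.ofReal ((2 / α) ^ n) * ∫⁻ x in H Q, B ^ p * N x := by
            gcongr 1
            exact setLIntegral_mono' (hHm Q hQ) hosc
        _ = _ := by
            rw [lintegral_const_mul _ hNm, mul_assoc]
    refine (Finset.sum_le_sum hone).trans ?_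
    rw [← Finset.mul_sum, ← lintegral_biUnion_finset
      (fun Q hQ Q' hQ' hne => (hdisj Q hQ Q' hQ' hne).mono (hHsub Q hQ) (hHsub Q' hQ')) hHm]
    gcongr
    refine iUnion₂_subset fun Q hQ x hx => ?_
    have h1 := (hHd Q hQ x hx).2
    have h2 := hdiam Q hQ
    have h3 := hpos Q hQ
    simp only [PCube.diam] at h2
    change infDist x S ≤ t
    linarith
  refine (ENNReal.rpow_le_rpow key hp.le).trans (le_of_eq ?_)
  rw [← ENNReal.rpow_mul, one_div_mul_cancel hp.ne', ENNReal.rpow_one]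

/-- For `d > 0` this is an equality; at `d = 0` the factor `0 ^ p = 0` absorbs the infinite
integral. -/
lemma rpow_mul_lintegral_tail_le {p d : ℝ} (hp : 0 < p) (hd : 0 ≤ d) :
    ENNReal.ofReal d ^ p * ∫⁻ t in Ioi (0 : ℝ), {t : ℝ | d ≤ t}.indicator
      (fun t => ENNReal.ofReal (t ^ (-p - 1))) t ≤ ENNReal.ofReal p⁻¹ := by
  rcases hd.eq_or_lt with rfl | hd
  · rw [ENNReal.ofReal_zero, ENNReal.zero_rpow_of_pos hp, zero_mul]
    exact zero_le
  have hs : {t : ℝ | d ≤ t} = Ici d := rfl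
  have hi : Ici d ∩ Ioi 0 = Ici d := inter_eq_left.2 fun t ht => lt_of_lt_of_le hd ht
  rw [hs, lintegral_indicator measurableSet_Ici, Measure.restrict_restrict measurableSet_Ici, hi,
    ← restrict_Ioi_eq_restrict_Ici, ← ofReal_integral_eq_lintegral_ofReal
      (integrableOn_Ioi_rpow_of_lt (by linarith) hd)
      ((ae_restrict_iff' measurableSet_Ioi).2
        (.of_forall fun t ht => Real.rpow_nonneg (hd.trans ht).le _)),
    integral_Ioi_rpow_of_lt (by linarith) hd, ENNReal.ofReal_rpow_of_nonneg hd.le hp.le,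
    ← ENNReal.ofReal_mul (by positivity)]
  refine ENNReal.ofReal_le_ofReal (le_of_eq ?_)
  have h1 : d ^ p * d ^ (-p) = 1 := by
    rw [← Real.rpow_add hd, add_neg_cancel, Real.rpow_zero]
  rw [sub_add_cancel, neg_div_neg_eq, mul_div_assoc', h1, one_div]

lemma lintegral_gradNorm {n : ℕ} {p : ℝ} {F : (Fin n → ℝ) → ℝ} (hp : 0 < p)
    (hint : Integrable (fun x => gradNorm F x ^ p) volume) :
    ∫⁻ x, ‖gradNorm F x‖ₑ ^ p = ENNReal.ofReal (∫ x, gradNorm F x ^ p) := by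
  have h0 : ∀ x, 0 ≤ gradNorm F x := fun x => norm_nonneg _
  rw [ofReal_integral_eq_lintegral_ofReal hint (.of_forall fun x => Real.rpow_nonneg (h0 x) _)]
  congr 1
  funext x
  rw [Real.enorm_of_nonneg (h0 x), ENNReal.ofReal_rpow_of_nonneg (h0 x) hp.le]

/-- In dimension zero every oscillation vanishes. -/
lemma apPorous_dim_zero {p α : ℝ} (hp : 0 < p) (F : (Fin 0 → ℝ) → ℝ) (t : ℝ)
    (S : Set (Fin 0 → ℝ)) : ApPorous p α F t S = 0 := by
  refine le_antisymm (iSup₂_le fun π _ => ?_) zero_le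
  have h : ∀ U, osc F U = 0 := fun U => le_antisymm (Real.sSup_le (by
    rintro _ ⟨⟨y, z⟩, -, rfl⟩
    simp [Subsingleton.elim y z]) le_rfl) (osc_nonneg _ _)
  simp [h, Real.zero_rpow hp.ne', Real.zero_rpow (inv_ne_zero hp.ne')]

theorem statement5 (n : ℕ) (p α : ℝ) (hp : (n : ℝ) < p) (hα0 : 0 < α) (hα1 : α ≤ 1) :
    ∃ C : ℝ, 0 < C ∧
      ∀ S : Set (Fin n → ℝ), S.Nonempty → IsClosed S →
        ∀ F : (Fin n → ℝ) → ℝ, ContDiff ℝ 1 F →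
          Integrable (fun x => gradNorm F x ^ p) volume →
          (∫⁻ t in Set.Ioi (0 : ℝ),
              ApPorous p α F t S ^ p * ENNReal.ofReal (t ^ (-p - 1)))
            ≤ ENNReal.ofReal (C * ∫ x, gradNorm F x ^ p) := by
  have hp0 : 0 < p := lt_of_le_of_lt (Nat.cast_nonneg n) hp
  rcases Nat.eq_zero_or_pos n with rfl | hn
  · refine ⟨1, one_pos, fun S _ _ F _ _ => ?_⟩
    simp [apPorous_dim_zero hp0, ENNReal.zero_rpow_of_pos hp0]
  have hn1 : (1 : ℝ) ≤ n := by exact_mod_cast hn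
  -- an exponent strictly between `n` (needed by Morrey) and `p` (needed by the maximal theorem)
  set q : ℝ := (n + p) / 2 with hq
  have hqn : (n : ℝ) < q := by rw [hq]; linarith
  have hqp : q < p := by rw [hq]; linarith
  have hq1 : 1 < q := by linarith
  have hq0 : 0 < q := by linarith
  obtain ⟨A, hA, hAp⟩ := apPorous_rpow_le (n := n) hq1 hqn hp0 hα0
  obtain ⟨D, hD, hmax⟩ := maxFun_strong hn ((one_lt_div hq0).2 hqp)
  set E : ℝ≥0∞ := A * (ENNReal.ofReal p⁻¹ * D) with hE
  have hEt : E ≠ ⊤ := by finiteness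
  refine ⟨E.toReal + 1, by positivity, fun S _ _ F hF hint => ?_⟩
  have hG : Measurable fun z => ‖gradNorm F z‖ₑ ^ q :=
    (continuous_gradNorm hF).measurable.enorm.pow_const q
  set M := maxFun (fun z => ‖gradNorm F z‖ₑ ^ q) with hM
  have hMm : Measurable M := measurable_maxFun hG
  have hNm : Measurable fun x => ENNReal.ofReal (infDist x S) ^ p * M x ^ (p / q) :=
    ((measurable_infDist.ennreal_ofReal).pow_const p).mul (hMm.pow_const _)
  have hset : MeasurableSet {w : ℝ × (Fin n → ℝ) | infDist w.2 S ≤ w.1} :=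
    measurableSet_le (measurable_infDist.comp measurable_snd) measurable_fst
  have hjoint : Measurable fun w : ℝ × (Fin n → ℝ) =>
      (ENNReal.ofReal (infDist w.2 S) ^ p * M w.2 ^ (p / q)) *
        {t : ℝ | infDist w.2 S ≤ t}.indicator (fun t => ENNReal.ofReal (t ^ (-p - 1))) w.1 := by
    refine (hNm.comp measurable_snd).mul ?_
    exact Measurable.indicator
      (f := fun w : ℝ × (Fin n → ℝ) => ENNReal.ofReal (w.1 ^ (-p - 1))) (by fun_prop) hset
  calc ∫⁻ t in Ioi (0 : ℝ), ApPorous p α F t S ^ p * ENNReal.ofReal (t ^ (-p - 1))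
      ≤ ∫⁻ t in Ioi (0 : ℝ), A * ∫⁻ x, (ENNReal.ofReal (infDist x S) ^ p * M x ^ (p / q)) *
          {t : ℝ | infDist x S ≤ t}.indicator (fun t => ENNReal.ofReal (t ^ (-p - 1))) t := by
        refine lintegral_mono fun t => ?_
        refine (mul_le_mul_left (hAp S F hF t) _).trans (le_of_eq ?_)
        rw [mul_assoc, ← lintegral_mul_const' _ _ ENNReal.ofReal_ne_top,
          ← lintegral_indicator (measurableSet_le measurable_infDist measurable_const)]
        congr 2
        funext x
        by_cases hx : infDist x S ≤ t
        · rw [indicator_of_mem (by exact hx), indicator_of_mem (by exact hx)]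
        · rw [indicator_of_notMem (by exact hx), indicator_of_notMem (by exact hx), mul_zero]
    _ = A * ∫⁻ x, M x ^ (p / q) * (ENNReal.ofReal (infDist x S) ^ p * ∫⁻ t in Ioi (0 : ℝ),
          {t : ℝ | infDist x S ≤ t}.indicator (fun t => ENNReal.ofReal (t ^ (-p - 1))) t) := by
        rw [lintegral_const_mul' _ _ hA, lintegral_lintegral_swap
          (f := fun t x => (ENNReal.ofReal (infDist x S) ^ p * M x ^ (p / q)) *
          {t : ℝ | infDist x S ≤ t}.indicator (fun t => ENNReal.ofReal (t ^ (-p - 1))) t)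
          hjoint.aemeasurable]
        congr 2
        funext x
        have hti : Measurable ({t : ℝ | infDist x S ≤ t}.indicator
            (fun t => ENNReal.ofReal (t ^ (-p - 1)))) :=
          Measurable.indicator (by fun_prop) measurableSet_Ici
        rw [lintegral_const_mul _ hti]
        ring
    _ ≤ A * ∫⁻ x, M x ^ (p / q) * ENNReal.ofReal p⁻¹ := by
        gcongr with x
        exact rpow_mul_lintegral_tail_le hp0 infDist_nonneg
    _ ≤ A * (D * (∫⁻ x, (‖gradNorm F x‖ₑ ^ q) ^ (p / q)) * ENNReal.ofReal p⁻¹) := by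
        rw [lintegral_mul_const' _ _ ENNReal.ofReal_ne_top]
        gcongr
        exact hmax _ hG fun x => by finiteness
    _ = E * ENNReal.ofReal (∫ x, gradNorm F x ^ p) := by
        rw [← lintegral_gradNorm hp0 hint, hE]
        simp_rw [← ENNReal.rpow_mul, mul_div_cancel₀ p hq0.ne']
        ring
    _ ≤ ENNReal.ofReal ((E.toReal + 1) * ∫ x, gradNorm F x ^ p) := by
        rw [ENNReal.ofReal_mul (by positivity)]
        gcongr
        rw [ENNReal.le_ofReal_iff_toReal_le hEt (by positivity)]
        linarith
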